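/- arXiv:2111.14026 — 3 statements merged into one kernel-verified Lean document; each statement's English description precedes it below -/
import Mathlib

section
/- If n ≥ 3 and C ⊆ [q]^n is a code of size M with at least two codewords and insdel distance d_I(C) = 2n − 2, then M ≤ (q² + q)/2. In other words, I_q(n, 2n−2) ≤ (q² + q)/2 for n ≥ 3. -/
/-!
Two words at insdel distance at least `2n - 2` have no common subsequence of length two, so the sets
of ordered pairs occurring as subsequences of the codewords are pairwise disjoint. Give a diagonal
pair `(a, a)` weight `2` and every other pair weight `1`; the total weight of `[q] × [q]` is
`q² + q`. Each codeword `u` accounts for weight at least `2`: if `u₁ = u₂`, then `(u₁, u₂)` is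
diagonal, and otherwise `(u₀, u₁)` and `(u₀, u₂)` are two distinct pairs. Hence `2 |C| ≤ q² + q`.
-/

open scoped BigOperators

/-- Length of a longest common subsequence of two words of length `n`. -/
noncomputable def lcsLen {α : Type*} {n : ℕ} (u v : Fin n → α) : ℕ :=
  sSup {ℓ : ℕ | ∃ w : List α, w.length = ℓ ∧ w.Sublist (List.ofFn u) ∧ w.Sublist (List.ofFn v)}

/-- Insdel distance between two words of length `n`: `d_I(u,v) = 2n - 2·ℓ_LCS(u,v)`. -/
noncomputable def insdelDist {α : Type*} {n : ℕ} (u v : Fin n → α) : ℕ :=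
  2 * n - 2 * lcsLen u v

/-- Minimum insdel distance of a code. -/
noncomputable def insdelDistSet {α : Type*} {n : ℕ} (C : Set (Fin n → α)) : ℕ :=
  sInf {d : ℕ | ∃ u ∈ C, ∃ v ∈ C, u ≠ v ∧ insdelDist u v = d}

/-- Minimum Hamming distance of a code. -/
noncomputable def hammingDistSet {α : Type*} {n : ℕ} [DecidableEq α] (C : Set (Fin n → α)) : ℕ :=
  sInf {d : ℕ | ∃ u ∈ C, ∃ v ∈ C, u ≠ v ∧ hammingDist u v = d}


/-- `I_q(n,d)`: the largest size of a code in `[q]^n` with insdel distance at least `d`. -/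
noncomputable def maxInsdelSize (q n d : ℕ) : ℕ :=
  sSup {M : ℕ | ∃ C : Finset (Fin n → Fin q), C.card = M ∧
    ∀ u ∈ C, ∀ v ∈ C, u ≠ v → d ≤ insdelDist u v}

section Words

variable {α : Type*} {n : ℕ} {u v : Fin n → α}

lemma length_le_lcsLen {w : List α} (hu : w.Sublist (List.ofFn u)) (hv : w.Sublist (List.ofFn v)) :
    w.length ≤ lcsLen u v := by
  refine le_csSup ⟨n, ?_⟩ ⟨w, rfl, hu, hv⟩
  rintro _ ⟨w', rfl, hw', -⟩
  simpa using hw'.length_le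

lemma two_mul_sub_two_mul_le_insdelDist_iff {k : ℕ} (hk : k < n) :
    2 * n - 2 * k ≤ insdelDist u v ↔ lcsLen u v ≤ k := by
  unfold insdelDist
  omega

lemma insdelDistSet_le_insdelDist {C : Set (Fin n → α)} (hu : u ∈ C) (hv : v ∈ C) (huv : u ≠ v) :
    insdelDistSet C ≤ insdelDist u v :=
  Nat.sInf_le ⟨u, hu, v, hv, huv, rfl⟩

lemma pair_sublist_ofFn (u : Fin n → α) {i j : Fin n} (hij : i < j) :
    [u i, u j].Sublist (List.ofFn u) :=
  List.pairwise_ofFn.1 (List.pairwise_iff_forall_sublist.2 id) hij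

end Words

section Pairs

variable {α : Type*} [Fintype α] [DecidableEq α] {n : ℕ}

/-- The subsequences of length two of the word `u`, encoded as ordered pairs of letters. -/
def subseqPairs (u : Fin n → α) : Finset (α × α) :=
  {p | [p.1, p.2].Sublist (List.ofFn u)}

lemma mem_subseqPairs {u : Fin n → α} {p : α × α} :
    p ∈ subseqPairs u ↔ [p.1, p.2].Sublist (List.ofFn u) := by
  simp [subseqPairs]

lemma mk_mem_subseqPairs (u : Fin n → α) {i j : Fin n} (hij : i < j) :
    (u i, u j) ∈ subseqPairs u :=
  mem_subseqPairs.2 (pair_sublist_ofFn u hij)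

lemma disjoint_subseqPairs {u v : Fin n → α} (h : lcsLen u v ≤ 1) :
    Disjoint (subseqPairs u) (subseqPairs v) := by
  refine Finset.disjoint_left.2 fun p hu hv => ?_
  have two_le : 2 ≤ lcsLen u v := length_le_lcsLen (mem_subseqPairs.1 hu) (mem_subseqPairs.1 hv)
  omega

end Pairs

section Weight

variable {α : Type*} [DecidableEq α]

/-- The weight of an ordered pair of letters in the double count: `2` on the diagonal and `1` off
it, so that each unordered pair has total weight `2`. -/
def pairWeight (p : α × α) : ℕ := if p.1 = p.2 then 2 else 1

lemma one_le_pairWeight (p : α × α) : 1 ≤ pairWeight p := by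
  unfold pairWeight
  split_ifs <;> norm_num

lemma sum_pairWeight [Fintype α] :
    ∑ p : α × α, pairWeight p = Fintype.card α ^ 2 + Fintype.card α := by
  have weight_eq (p : α × α) : pairWeight p = 1 + if p.1 = p.2 then 1 else 0 := by
    unfold pairWeight
    split_ifs <;> rfl
  rw [Fintype.sum_prod_type]
  simp [weight_eq, Finset.sum_add_distrib, sq, mul_add]

lemma two_le_sum_pairWeight_subseqPairs [Fintype α] {n : ℕ} (hn : 3 ≤ n) (u : Fin n → α) :
    2 ≤ ∑ p ∈ subseqPairs u, pairWeight p := by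
  obtain ⟨m, rfl⟩ := Nat.exists_eq_add_of_le' hn
  have mem01 : (u 0, u 1) ∈ subseqPairs u := mk_mem_subseqPairs u (by simp)
  have mem02 : (u 0, u 2) ∈ subseqPairs u :=
    mk_mem_subseqPairs u (by simp [Fin.lt_def, Nat.mod_eq_of_lt])
  have mem12 : (u 1, u 2) ∈ subseqPairs u :=
    mk_mem_subseqPairs u (by simp [Fin.lt_def, Nat.mod_eq_of_lt])
  by_cases h : u 1 = u 2
  · calc 2 = pairWeight (u 1, u 2) := (if_pos h).symm
      _ ≤ ∑ p ∈ subseqPairs u, pairWeight p :=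
        Finset.single_le_sum (fun _ _ => Nat.zero_le _) mem12
  · have hne : (u 0, u 1) ≠ (u 0, u 2) := fun heq => h (congrArg Prod.snd heq)
    calc 2 ≤ pairWeight (u 0, u 1) + pairWeight (u 0, u 2) :=
        add_le_add (one_le_pairWeight _) (one_le_pairWeight _)
      _ ≤ ∑ p ∈ subseqPairs u, pairWeight p :=
        Finset.add_le_sum (fun _ _ => Nat.zero_le _) mem01 mem02 hne

end Weight

theorem size_bound_insdel_two_n_sub_two_general {α : Type*} [Fintype α] {n : ℕ} (hn : 3 ≤ n)
    {C : Finset (Fin n → α)}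
    (hC : ∀ u ∈ C, ∀ v ∈ C, u ≠ v → 2 * n - 2 ≤ insdelDist u v) :
    C.card ≤ (Fintype.card α ^ 2 + Fintype.card α) / 2 := by
  classical
  have hdisj : (C : Set (Fin n → α)).PairwiseDisjoint subseqPairs := fun u hu v hv huv =>
    disjoint_subseqPairs <|
      (two_mul_sub_two_mul_le_insdelDist_iff (by omega)).1 (hC u hu v hv huv)
  rw [Nat.le_div_iff_mul_le two_pos]
  calc C.card * 2 ≤ ∑ u ∈ C, ∑ p ∈ subseqPairs u, pairWeight p :=
        Finset.card_nsmul_le_sum C _ 2 fun u _ => two_le_sum_pairWeight_subseqPairs hn u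
    _ = ∑ p ∈ C.biUnion subseqPairs, pairWeight p := (Finset.sum_biUnion hdisj).symm
    _ ≤ ∑ p, pairWeight p := Finset.sum_le_sum_of_subset (Finset.subset_univ _)
    _ = Fintype.card α ^ 2 + Fintype.card α := sum_pairWeight

/-- If `n ≥ 3` and `C ⊆ [q]^n` has at least two codewords and insdel distance `2n - 2`,
then `|C| ≤ (q² + q)/2`; in other words `I_q(n, 2n-2) ≤ (q² + q)/2` for `n ≥ 3`. -/
theorem size_bound_insdel_two_n_sub_two (q n : ℕ) (hq : 2 ≤ q) (hn : 3 ≤ n) :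
    (∀ C : Finset (Fin n → Fin q), 2 ≤ C.card →
      insdelDistSet (C : Set (Fin n → Fin q)) = 2 * n - 2 →
      C.card ≤ (q ^ 2 + q) / 2) ∧
    maxInsdelSize q n (2 * n - 2) ≤ (q ^ 2 + q) / 2 := by
  refine ⟨fun C _ hd => ?_, csSup_le' ?_⟩
  · simpa only [Fintype.card_fin] using size_bound_insdel_two_n_sub_two_general (C := C) hn
      fun u hu v hv huv => hd ▸ insdelDistSet_le_insdelDist hu hv huv
  · rintro _ ⟨C, rfl, hC⟩
    simpa only [Fintype.card_fin] using size_bound_insdel_two_n_sub_two_general hn hC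
end

section
/- For all integers q ≥ 2, n ≥ 3 and every even integer d with 2q ≤ d ≤ 2n − 2, one has I_q(n, d) ≤ q^{n − d/2}. -/
/-!
Put `k = n - ⌈d/2⌉`. Two distinct codewords have no common subsequence of length `k + 1`, and
`n ≥ k + q`. Deleting the last `k - 1` letters of a word leaves at least `q + 1` letters, so by
pigeonhole some letter `a` occurs twice among these; hence every word has a subsequence `a a y`
of length `k + 1`. This subsequence is recovered from `a y`, which has length `k`, so distinct
codewords have distinct `a y`, of which there are at most `q ^ k`.
-/

open scoped BigOperators

lemma lcsLen_le_iff {α : Type*} {n k : ℕ} {u v : Fin n → α} :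
    lcsLen u v ≤ k ↔
      ∀ w : List α, w.Sublist (List.ofFn u) → w.Sublist (List.ofFn v) → w.length ≤ k := by
  have hbdd : BddAbove {ℓ : ℕ | ∃ w : List α, w.length = ℓ ∧ w.Sublist (List.ofFn u) ∧
      w.Sublist (List.ofFn v)} := by
    refine ⟨n, ?_⟩
    rintro _ ⟨w, rfl, hu, -⟩
    simpa using hu.length_le
  rw [lcsLen, csSup_le_iff' hbdd]
  exact ⟨fun h w hu hv ↦ h _ ⟨w, rfl, hu, hv⟩, fun h _ ⟨w, hw, hu, hv⟩ ↦ hw ▸ h w hu hv⟩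

lemma lcsLen_le {α : Type*} {n : ℕ} (u v : Fin n → α) : lcsLen u v ≤ n :=
  lcsLen_le_iff.2 fun w hu _ ↦ by simpa using hu.length_le

lemma le_insdelDist_iff {α : Type*} {n d : ℕ} {u v : Fin n → α} :
    d ≤ insdelDist u v ↔ lcsLen u v + (d + 1) / 2 ≤ n := by
  have := lcsLen_le u v
  rw [insdelDist]
  omega

lemma exists_cons_cons_sublist {α : Type*} [Fintype α] {l : List α} {m : ℕ}
    (h : Fintype.card α + m < l.length) :
    ∃ (a : α) (y : List.Vector α m), (a :: a :: y.toList).Sublist l := by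
  have hdup : ¬(l.take (l.length - m)).Nodup := fun hnodup ↦ by
    have hcard := hnodup.length_le_card
    rw [List.length_take] at hcard
    omega
  obtain ⟨a, ha⟩ := List.exists_duplicate_iff_not_nodup.2 hdup
  refine ⟨a, ⟨l.drop (l.length - m), by rw [List.length_drop]; omega⟩, ?_⟩
  simpa using (List.duplicate_iff_sublist.1 ha).append_right (l.drop (l.length - m))

theorem card_le_pow_of_pairwise_lcsLen_le {α : Type*} [Fintype α] {n k : ℕ}
    {C : Finset (Fin n → α)} (hk : k ≠ 0) (hn : Fintype.card α + k ≤ n)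
    (hC : (C : Set (Fin n → α)).Pairwise fun u v ↦ lcsLen u v ≤ k) :
    C.card ≤ Fintype.card α ^ k := by
  obtain ⟨m, rfl⟩ := Nat.exists_eq_succ_of_ne_zero hk
  have hdouble (u : Fin n → α) :
      ∃ (a : α) (y : List.Vector α m), (a :: a :: y.toList).Sublist (List.ofFn u) :=
    exists_cons_cons_sublist (by rw [List.length_ofFn]; omega)
  choose a y hsub using hdouble
  have hinj : Set.InjOn (fun u ↦ (a u ::ᵥ y u : List.Vector α (m + 1))) C := by
    intro u hu v hv huv
    by_contra hne
    have ha : a u = a v := congrArg List.Vector.head huv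
    have hy : y u = y v := congrArg List.Vector.tail huv
    have hlen := lcsLen_le_iff.1 (hC hu hv hne) _ (hsub u) (ha ▸ hy ▸ hsub v)
    simp at hlen
  calc
    C.card ≤ Fintype.card (List.Vector α (m + 1)) :=
      Finset.card_le_card_of_injOn _ (fun _ _ ↦ Finset.mem_univ _) hinj
    _ = Fintype.card α ^ (m + 1) := card_vector _

theorem maxInsdelSize_upper_bound_large_d_general {q n d : ℕ} (hqd : 2 * q ≤ d + 1)
    (hdn : d + 2 ≤ 2 * n) : maxInsdelSize q n d ≤ q ^ (n - (d + 1) / 2) := by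
  refine csSup_le' ?_
  rintro _ ⟨C, rfl, hC⟩
  have hlcs : (C : Set (Fin n → Fin q)).Pairwise fun u v ↦ lcsLen u v ≤ n - (d + 1) / 2 :=
    fun u hu v hv huv ↦ Nat.le_sub_of_add_le (le_insdelDist_iff.1 (hC u hu v hv huv))
  have hkn : Fintype.card (Fin q) + (n - (d + 1) / 2) ≤ n := by
    rw [Fintype.card_fin]
    omega
  simpa using card_le_pow_of_pairwise_lcsLen_le (by omega) hkn hlcs

/-- For `q ≥ 2`, `n ≥ 3` and even `d` with `2q ≤ d ≤ 2n - 2`, one has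
`I_q(n,d) ≤ q^(n - d/2)`. -/
theorem maxInsdelSize_upper_bound_large_d (q n d : ℕ) (hq : 2 ≤ q) (hn : 3 ≤ n)
    (hdev : 2 ∣ d) (hd2q : 2 * q ≤ d) (hdn : d ≤ 2 * n - 2) :
    maxInsdelSize q n d ≤ q ^ (n - d / 2) := by
  rw [show d / 2 = (d + 1) / 2 by omega]
  exact maxInsdelSize_upper_bound_large_d_general (by omega) (by omega)
end

section
/- Let n ≥ 4 be an integer and q a prime power with q > n(n−1)²(n−2)²/4. Then there exist pairwise distinct elements α_1,...,α_n ∈ F_q such that the two-dimensional Reed-Solomon code RS_α(n,2) has insdel distance exactly 2n − 4. -/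
/-!
Call points `α₀, …, αₙ₋₁` of a field rigid if no affine map `x ↦ bx + c` other than the identity
carries an increasing triple of them to an increasing triple. If two affine functions `f, g` take
equal values along increasing triples `i, j` of indices and `g` is not constant, then `g⁻¹ ∘ f`
carries `α ∘ i` to `α ∘ j`; so at rigid points distinct codewords have no common subsequence of
length three. Length two always occurs, for the identity and the affine function with `α₀ ↦ α₁`,
`α₁ ↦ α₂`.

Rigid points are chosen greedily, each new point `x` in front of the `m` old ones. If an affine map
spoils rigidity, then, up to replacing it by its inverse, it carries a triple that starts at `x` to
some triple. It is determined by its values at the two old points that follow `x`, and then so is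
`x`, as the preimage of an old point or as the unique fixed point of the map. This excludes at most
`m.choose 2 * (m + 1).choose 3` values of `x` besides the old points.
-/

open scoped BigOperators

section CommonSubsequences

variable {α : Type*} {k n : ℕ}

lemma ofFn_sublist_ofFn_iff {w : Fin k → α} {u : Fin n → α} :
    (List.ofFn w).Sublist (List.ofFn u) ↔ ∃ i : Fin k ↪o Fin n, w = u ∘ i := by
  have hk : (List.ofFn w).length = k := List.length_ofFn
  have hn : (List.ofFn u).length = n := List.length_ofFn
  rw [List.sublist_iff_exists_fin_orderEmbedding_get_eq]
  constructor
  · rintro ⟨φ, hφ⟩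
    refine ⟨((Fin.castOrderIso hk.symm).toOrderEmbedding.trans φ).trans
      (Fin.castOrderIso hn).toOrderEmbedding, funext fun s => ?_⟩
    simpa [Fin.cast] using hφ (Fin.cast hk.symm s)
  · rintro ⟨i, rfl⟩
    exact ⟨((Fin.castOrderIso hk).toOrderEmbedding.trans i).trans
      (Fin.castOrderIso hn.symm).toOrderEmbedding, fun s => by simp [Fin.cast]⟩

lemma le_lcsLen_iff {u v : Fin n → α} :
    k ≤ lcsLen u v ↔ ∃ i j : Fin k ↪o Fin n, u ∘ i = v ∘ j := by
  let S : Set ℕ :=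
    {ℓ | ∃ w : List α, w.length = ℓ ∧ w.Sublist (List.ofFn u) ∧ w.Sublist (List.ofFn v)}
  have hbdd : BddAbove S := by
    refine ⟨n, ?_⟩
    rintro _ ⟨w, rfl, hu, -⟩
    simpa using hu.length_le
  constructor
  · intro hk
    obtain ⟨w, hw, hu, hv⟩ : lcsLen u v ∈ S := Nat.sSup_mem ⟨0, [], by simp⟩ hbdd
    rw [← hw] at hk
    rw [← List.ofFn_get w, ofFn_sublist_ofFn_iff] at hu hv
    obtain ⟨i, hi⟩ := hu
    obtain ⟨j, hj⟩ := hv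
    refine ⟨(Fin.castLEOrderEmb hk).trans i, (Fin.castLEOrderEmb hk).trans j, funext fun s => ?_⟩
    exact congrFun (hi.symm.trans hj) (Fin.castLE hk s)
  · rintro ⟨i, j, hij⟩
    exact le_csSup hbdd ⟨List.ofFn (u ∘ i), List.length_ofFn,
      ofFn_sublist_ofFn_iff.2 ⟨i, rfl⟩, ofFn_sublist_ofFn_iff.2 ⟨j, hij⟩⟩

lemma insdelDistSet_eq_of_lcsLen_le {C : Set (Fin n → α)}
    (hle : ∀ u ∈ C, ∀ v ∈ C, u ≠ v → lcsLen u v ≤ k)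
    (hex : ∃ u ∈ C, ∃ v ∈ C, u ≠ v ∧ k ≤ lcsLen u v) :
    insdelDistSet C = 2 * n - 2 * k := by
  obtain ⟨u, hu, v, hv, huv, hk⟩ := hex
  have hmem : ∃ u ∈ C, ∃ v ∈ C, u ≠ v ∧ insdelDist u v = 2 * n - 2 * k :=
    ⟨u, hu, v, hv, huv, by rw [insdelDist, (hle u hu v hv huv).antisymm hk]⟩
  refine le_antisymm (Nat.sInf_le hmem) (le_csInf ⟨_, hmem⟩ ?_)
  rintro _ ⟨u, hu, v, hv, huv, rfl⟩
  exact Nat.sub_le_sub_left (Nat.mul_le_mul_left 2 (hle u hu v hv huv)) _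

end CommonSubsequences

/-- The Reed-Solomon code `RS_α(n, k)`, with evaluation points `α` indexed by any type `ι`. -/
def rsCode {ι F : Type*} [Semiring F] (α : ι → F) (k : ℕ) : Set (ι → F) :=
  {c | ∃ f : Polynomial F, f.degree < k ∧ c = fun t => f.eval (α t)}

lemma mem_rsCode_two_iff {ι F : Type*} [Semiring F] {α c : ι → F} :
    c ∈ rsCode α 2 ↔ ∃ a b : F, c = fun t => a * α t + b := by
  constructor
  · rintro ⟨f, hf, rfl⟩
    have hf' : f.natDegree ≤ 1 :=
      Polynomial.natDegree_le_of_degree_le (Order.le_of_lt_succ hf)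
    obtain ⟨a, b, rfl⟩ := Polynomial.exists_eq_X_add_C_of_natDegree_le_one hf'
    exact ⟨a, b, by simp⟩
  · rintro ⟨a, b, rfl⟩
    exact ⟨Polynomial.C a * Polynomial.X + Polynomial.C b, Polynomial.degree_linear_lt, by simp⟩

lemma affine_eq_of_eq_at_two_points {R : Type*} [CommRing R] [NoZeroDivisors R]
    {a b c d x y : R} (hxy : x ≠ y) (hx : a * x + b = c * x + d) (hy : a * y + b = c * y + d) :
    a = c ∧ b = d := by
  obtain rfl : a = c :=
    mul_right_cancel₀ (sub_ne_zero.2 hxy) (by linear_combination hx - hy)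
  exact ⟨rfl, add_left_cancel hx⟩

lemma exists_affine_eq_at_two_points {F : Type*} [Field F] {x y : F} (hxy : x ≠ y) (z w : F) :
    ∃ a b : F, a * x + b = z ∧ a * y + b = w := by
  have hyx : y - x ≠ 0 := sub_ne_zero.2 hxy.symm
  refine ⟨(w - z) / (y - x), z - (w - z) / (y - x) * x, by ring, ?_⟩
  field_simp
  ring

/-- Points `α` such that no affine map `x ↦ b * x + c` other than the identity carries an increasing
triple of them to an increasing triple: what keeps distinct codewords of `rsCode α 2` from having a
common subsequence of length three. -/
def AffinelyRigid {F : Type*} [Semiring F] {n : ℕ} (α : Fin n → F) : Prop :=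
  ∀ (i j : Fin 3 ↪o Fin n) (b c : F), (∀ s, b * α (i s) + c = α (j s)) → b = 1 ∧ c = 0

section InsdelDistance

variable {F : Type*} [Field F] {n : ℕ} {α : Fin n → F}

lemma AffinelyRigid.affine_eq (hα : AffinelyRigid α) (hinj : Function.Injective α)
    {i j : Fin 3 ↪o Fin n} {a b c d : F} (h : ∀ s, a * α (i s) + b = c * α (j s) + d) :
    a = c ∧ b = d := by
  by_cases hc : c = 0
  · subst hc
    have hne : α (i 0) ≠ α (i 1) := hinj.ne (i.injective.ne (by decide))
    exact affine_eq_of_eq_at_two_points hne (by simpa using h 0) (by simpa using h 1)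
  · obtain ⟨hac, hbd⟩ := hα i j (a / c) ((b - d) / c) fun s => by
      field_simp
      linear_combination h s
    exact ⟨(div_eq_one_iff_eq hc).1 hac,
      sub_eq_zero.1 ((div_eq_zero_iff.1 hbd).resolve_right hc)⟩

lemma AffinelyRigid.lcsLen_le_two (hα : AffinelyRigid α) (hinj : Function.Injective α)
    {u v : Fin n → F} (hu : u ∈ rsCode α 2) (hv : v ∈ rsCode α 2) (huv : u ≠ v) :
    lcsLen u v ≤ 2 := by
  obtain ⟨a, b, rfl⟩ := mem_rsCode_two_iff.1 hu
  obtain ⟨c, d, rfl⟩ := mem_rsCode_two_iff.1 hv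
  by_contra! hlcs
  obtain ⟨i, j, hij⟩ := le_lcsLen_iff.1 hlcs
  obtain ⟨rfl, rfl⟩ := hα.affine_eq hinj (congrFun hij)
  exact huv rfl

lemma exists_two_le_lcsLen_of_mem_rsCode (hn : 3 ≤ n) (hinj : Function.Injective α) :
    ∃ u ∈ rsCode α 2, ∃ v ∈ rsCode α 2, u ≠ v ∧ 2 ≤ lcsLen u v := by
  let i : Fin 2 ↪o Fin n := Fin.castSuccOrderEmb.trans (Fin.castLEOrderEmb hn)
  let j : Fin 2 ↪o Fin n := (Fin.succOrderEmb 2).trans (Fin.castLEOrderEmb hn)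
  have hi : α (i 0) ≠ α (i 1) := hinj.ne (i.injective.ne (by decide))
  have hij : α (i 0) ≠ α (j 0) := hinj.ne ((Fin.castLEOrderEmb hn).injective.ne (by decide))
  obtain ⟨a, b, h0, h1⟩ := exists_affine_eq_at_two_points hi (α (j 0)) (α (j 1))
  refine ⟨fun t => a * α t + b, mem_rsCode_two_iff.2 ⟨a, b, rfl⟩, α,
    mem_rsCode_two_iff.2 ⟨1, 0, by simp⟩, fun heq => ?_, le_lcsLen_iff.2 ⟨i, j, ?_⟩⟩
  · exact hij ((congrFun heq (i 0)).symm.trans h0)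
  · exact funext (Fin.forall_fin_two.2 ⟨h0, h1⟩)

lemma AffinelyRigid.insdelDistSet_rsCode_two (hα : AffinelyRigid α) (hinj : Function.Injective α)
    (hn : 3 ≤ n) : insdelDistSet (rsCode α 2) = 2 * n - 4 :=
  insdelDistSet_eq_of_lcsLen_le (fun _ hu _ hv => hα.lcsLen_le_two hinj hu hv)
    (exists_two_le_lcsLen_of_mem_rsCode hn hinj)

end InsdelDistance

section GreedyChoice

open Matrix (vecCons)

lemma exists_forall_notMem_of_subsingleton {ι X : Type*} {S : ι → Set X}
    (hS : ∀ t, (S t).Subsingleton) (hcard : ENat.card ι < ENat.card X) : ∃ x, ∀ t, x ∉ S t := by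
  by_contra! hcover
  choose f hf using hcover
  have hinj : Function.Injective f := fun x y hxy => hS (f x) (hf x) (hxy ▸ hf y)
  exact hcard.not_ge (ENat.card_le_card_of_injective hinj)

lemma enatCard_fin_orderEmbedding (k n : ℕ) : ENat.card (Fin k ↪o Fin n) = n.choose k := by
  rw [ENat.card_congr Set.powersetCard.ofFinEmbEquiv, ENat.card_eq_coe_natCard,
    Set.powersetCard.card, Nat.card_fin]

lemma exists_orderEmbedding_succ {k m : ℕ} (i : Fin k ↪o Fin (m + 1)) (hi : ∀ s, i s ≠ 0) :
    ∃ i' : Fin k ↪o Fin m, ∀ s, i s = (i' s).succ :=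
  ⟨OrderEmbedding.ofStrictMono (fun s => (i s).pred (hi s)) fun _ _ hst =>
    Fin.pred_lt_pred_iff.2 (i.lt_iff_lt.2 hst), fun s => (Fin.succ_pred (i s) (hi s)).symm⟩

lemma exists_orderEmbedding_tail {k m : ℕ} (i : Fin (k + 1) ↪o Fin (m + 1)) :
    ∃ i' : Fin k ↪o Fin m, ∀ s : Fin k, i s.succ = (i' s).succ :=
  exists_orderEmbedding_succ ((Fin.succOrderEmb k).trans i) fun s =>
    Fin.ne_zero_of_lt (i.strictMono s.succ_pos)

variable {F : Type*} [Field F] {m : ℕ} {α : Fin m → F}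

/-- The values `x` of a new first point for which a nonidentity affine map carries the triple
`x, α (i 0), α (i 1)` to the triple with indices `j` among the extended points. -/
def spoilingPoints (α : Fin m → F) (i : Fin 2 ↪o Fin m) (j : Fin 3 ↪o Fin (m + 1)) : Set F :=
  {x | ∃ b c : F, ¬ (b = 1 ∧ c = 0) ∧ b * x + c = vecCons x α (j 0) ∧
    ∀ s, b * α (i s) + c = vecCons x α (j s.succ)}

lemma spoilingPoints_subsingleton (hinj : Function.Injective α) (i : Fin 2 ↪o Fin m)
    (j : Fin 3 ↪o Fin (m + 1)) : (spoilingPoints α i j).Subsingleton := by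
  rintro x ⟨b, c, hbc, hx, hpair⟩ y ⟨b', c', -, hy, hpair'⟩
  obtain ⟨j', hj'⟩ := exists_orderEmbedding_tail j
  simp only [hj', Matrix.cons_val_succ] at hpair hpair'
  have hi : α (i 0) ≠ α (i 1) := hinj.ne (i.injective.ne (by decide))
  have hj : α (j' 0) ≠ α (j' 1) := hinj.ne (j'.injective.ne (by decide))
  obtain ⟨rfl, rfl⟩ : b = b' ∧ c = c' := affine_eq_of_eq_at_two_points hi
    ((hpair 0).trans (hpair' 0).symm) ((hpair 1).trans (hpair' 1).symm)
  rcases Fin.eq_zero_or_eq_succ (j 0) with hj0 | ⟨t, ht⟩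
  · simp only [hj0, Matrix.cons_val_zero] at hx hy
    by_contra hxy
    exact hbc (affine_eq_of_eq_at_two_points hxy (by simpa using hx) (by simpa using hy))
  · simp only [ht, Matrix.cons_val_succ] at hx hy
    have hb : b ≠ 0 := by
      rintro rfl
      exact hj ((hpair 0).symm.trans (by simpa using hpair 1))
    exact mul_left_cancel₀ hb (add_right_cancel (hx.trans hy.symm))

lemma affine_eq_id_of_notMem_spoilingPoints {x b c : F} (hx : ∀ i j, x ∉ spoilingPoints α i j)
    {i j : Fin 3 ↪o Fin (m + 1)} (hi : i 0 = 0)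
    (h : ∀ s, b * vecCons x α (i s) + c = vecCons x α (j s)) : b = 1 ∧ c = 0 := by
  obtain ⟨i', hi'⟩ := exists_orderEmbedding_tail i
  by_contra hbc
  exact hx i' j ⟨b, c, hbc, by simpa [hi] using h 0, fun s => by simpa [hi'] using h s.succ⟩

lemma AffinelyRigid.cons (hα : AffinelyRigid α) {x : F}
    (hinj : Function.Injective (vecCons x α)) (hx : ∀ i j, x ∉ spoilingPoints α i j) :
    AffinelyRigid (vecCons x α) := by
  intro i j b c h
  by_cases hi : i 0 = 0
  · exact affine_eq_id_of_notMem_spoilingPoints hx hi h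
  by_cases hj : j 0 = 0
  · have hb : b ≠ 0 := by
      rintro rfl
      have hj01 : j 0 ≠ j 1 := j.injective.ne (by decide)
      exact hj01 (hinj ((h 0).symm.trans (by simpa using h 1)))
    have hinv : ∀ s, b⁻¹ * vecCons x α (j s) + -(b⁻¹ * c) = vecCons x α (i s) := fun s => by
      rw [← h s]
      field_simp
      ring
    obtain ⟨hb1, hc0⟩ := affine_eq_id_of_notMem_spoilingPoints hx hj hinv
    exact ⟨inv_eq_one.1 hb1, by simpa [hb] using hc0⟩
  have ne_zero : ∀ k : Fin 3 ↪o Fin (m + 1), k 0 ≠ 0 → ∀ s, k s ≠ 0 := fun k hk s =>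
    ((Fin.pos_of_ne_zero hk).trans_le (k.monotone s.zero_le)).ne'
  obtain ⟨i', hi'⟩ := exists_orderEmbedding_succ i (ne_zero i hi)
  obtain ⟨j', hj'⟩ := exists_orderEmbedding_succ j (ne_zero j hj)
  exact hα i' j' b c fun s => by simpa [hi', hj'] using h s

lemma AffinelyRigid.exists_cons (hα : AffinelyRigid α) (hinj : Function.Injective α)
    (hF : ((m + m.choose 2 * (m + 1).choose 3 : ℕ) : ℕ∞) < ENat.card F) :
    ∃ x, Function.Injective (vecCons x α) ∧ AffinelyRigid (vecCons x α) := by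
  let S : Fin m ⊕ (Fin 2 ↪o Fin m) × (Fin 3 ↪o Fin (m + 1)) → Set F :=
    Sum.elim (fun t => {α t}) fun q => spoilingPoints α q.1 q.2
  have hS : ∀ t, (S t).Subsingleton := by
    rintro (t | ⟨i, j⟩)
    · exact Set.subsingleton_singleton
    · exact spoilingPoints_subsingleton hinj i j
  have hcard : ENat.card (Fin m ⊕ (Fin 2 ↪o Fin m) × (Fin 3 ↪o Fin (m + 1))) < ENat.card F := by
    rw [ENat.card_sum, ENat.card_prod, enatCard_fin_orderEmbedding, enatCard_fin_orderEmbedding,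
      ENat.card_eq_coe_fintype_card, Fintype.card_fin]
    exact_mod_cast hF
  obtain ⟨x, hx⟩ := exists_forall_notMem_of_subsingleton hS hcard
  have hnew : Function.Injective (vecCons x α) := Fin.cons_injective_iff.2
    ⟨fun ⟨t, ht⟩ => hx (Sum.inl t) ht.symm, hinj⟩
  exact ⟨x, hnew, hα.cons hnew fun i j => hx (Sum.inr (i, j))⟩

lemma exists_injective_affinelyRigid (n : ℕ)
    (hF : ((n - 1 + (n - 1).choose 2 * n.choose 3 : ℕ) : ℕ∞) < ENat.card F) :
    ∃ α : Fin n → F, Function.Injective α ∧ AffinelyRigid α := by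
  induction n with
  | zero => exact ⟨Fin.elim0, fun t => t.elim0, fun i => (i 0).elim0⟩
  | succ n ih =>
    have hmono : n - 1 + (n - 1).choose 2 * n.choose 3 ≤ n + n.choose 2 * (n + 1).choose 3 := by
      gcongr <;> omega
    obtain ⟨α, hinj, hα⟩ := ih ((Nat.cast_le.2 hmono).trans_lt hF)
    obtain ⟨x, hx⟩ := hα.exists_cons hinj hF
    exact ⟨vecCons x α, hx⟩

end GreedyChoice

theorem exists_rs_two_dim_optimal_insdel_general {F : Type*} [Field F] {n : ℕ} (hn : 3 ≤ n)
    (hF : ((n - 1 + (n - 1).choose 2 * n.choose 3 : ℕ) : ℕ∞) < ENat.card F) :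
    ∃ α : Fin n → F, Function.Injective α ∧ insdelDistSet (rsCode α 2) = 2 * n - 4 := by
  obtain ⟨α, hinj, hα⟩ := exists_injective_affinelyRigid n hF
  exact ⟨α, hinj, hα.insdelDistSet_rsCode_two hinj hn⟩

lemma add_choose_mul_choose_le {n : ℕ} (hn : 3 ≤ n) :
    n - 1 + (n - 1).choose 2 * n.choose 3 ≤ n * (n - 1) ^ 2 * (n - 2) ^ 2 / 4 := by
  obtain ⟨m, rfl⟩ := Nat.exists_eq_add_of_le' hn
  have htwo : (m + 2) * (m + 1) = (m + 2).choose 2 * 2 := by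
    simpa using Nat.add_one_mul_choose_eq (m + 1) 1
  have hthree : (m + 3) * (m + 2).choose 2 = (m + 3).choose 3 * 3 :=
    Nat.add_one_mul_choose_eq (m + 2) 2
  have hquarter : (m + 3) * (m + 2) ^ 2 * (m + 1) ^ 2 / 4 = (m + 3) * (m + 2).choose 2 ^ 2 := by
    refine Nat.div_eq_of_eq_mul_left (by norm_num) ?_
    calc (m + 3) * (m + 2) ^ 2 * (m + 1) ^ 2
        = (m + 3) * ((m + 2) * (m + 1)) ^ 2 := by ring
      _ = (m + 3) * (m + 2).choose 2 ^ 2 * 4 := by rw [htwo]; ring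
  change m + 2 + (m + 2).choose 2 * (m + 3).choose 3 ≤ (m + 3) * (m + 2) ^ 2 * (m + 1) ^ 2 / 4
  rw [hquarter]
  generalize (m + 2).choose 2 = C at *
  generalize (m + 3).choose 3 = T at *
  have hC : m + 2 ≤ 2 * C := by nlinarith
  nlinarith

/-- Theorem 4.8: if `q > n(n-1)²(n-2)²/4`, there are evaluation points making the
two-dimensional Reed-Solomon code of length `n` have insdel distance exactly `2n - 4`. -/
theorem exists_rs_two_dim_optimal_insdel (q n : ℕ) (F : Type*) [Field F] [Fintype F]
    (hF : Fintype.card F = q) (hn : 4 ≤ n)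
    (hq : n * (n - 1) ^ 2 * (n - 2) ^ 2 / 4 < q) :
    ∃ α : Fin n → F, Function.Injective α ∧
      insdelDistSet {c : Fin n → F |
        ∃ f : Polynomial F, f.degree < 2 ∧ c = fun t => f.eval (α t)} = 2 * n - 4 := by
  subst hF
  refine exists_rs_two_dim_optimal_insdel_general (by omega) ?_
  rw [ENat.card_eq_coe_fintype_card]
  exact Nat.cast_lt.2 ((add_choose_mul_choose_le (by omega)).trans_lt hq)
end
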